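/- arXiv:2307.09581 — 4 statements merged into one kernel-verified Lean document; each statement's English description precedes it below -/
import Mathlib

section
/- For every real polynomial p, the truncated Laguerre functional satisfies the distributional Pearson equation D(φℓ) + ψℓ = 0 with φ(x) = (x−z)x and ψ(x) = −x(z+2+α−x) + z(1+α); explicitly, −∫₀^z (x−z)·x·p′(x)·x^α·e^{−x} dx + ∫₀^z (−x(z+2+α−x) + z(1+α))·p(x)·x^α·e^{−x} dx = 0. -/
open MeasureTheory intervalIntegral

/-!
Write `w x = x ^ α * exp (-x)` for the Laguerre weight. From `(x w)' = (α + 1 - x) w` the product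
rule gives `((x - z) x w)' = -ψ w`. The function `(x - z) x w` vanishes at both `0` and `z`, at `0`
because `α > -1`, so the Pearson equation is integration by parts without boundary terms.
-/

/-- `φ`, `ψ` and the weight `w` form a *Pearson triple* on `[a, b]`: the functional
`⟨ℓ, f⟩ = ∫ x in a..b, f x * w x` satisfies `D(φ ℓ) + ψ ℓ = 0`. The equation is encoded classically,
as `(φ w)' = -ψ w` on the open interval, together with the vanishing of `φ w` at the endpoints,
where `w` itself may be singular. -/
structure IsPearsonTriple (a b : ℝ) (φ ψ w : ℝ → ℝ) : Prop where
  continuousOn : ContinuousOn (fun x ↦ φ x * w x) (Set.uIcc a b)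
  hasDerivAt : ∀ x ∈ Set.Ioo (min a b) (max a b),
    HasDerivAt (fun x ↦ φ x * w x) (-(ψ x * w x)) x
  intervalIntegrable : IntervalIntegrable (fun x ↦ ψ x * w x) volume a b
  left_eq_zero : φ a * w a = 0
  right_eq_zero : φ b * w b = 0

theorem IsPearsonTriple.neg_integral_add_integral_eq_zero {a b : ℝ} {φ ψ w f f' : ℝ → ℝ}
    (h : IsPearsonTriple a b φ ψ w) (hf : ContinuousOn f (Set.uIcc a b))
    (hff' : ∀ x ∈ Set.Ioo (min a b) (max a b), HasDerivAt f (f' x) x)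
    (hf' : IntervalIntegrable f' volume a b) :
    -(∫ x in a..b, φ x * f' x * w x) + ∫ x in a..b, ψ x * f x * w x = 0 := by
  have by_parts : ∫ x in a..b, φ x * w x * f' x = -∫ x in a..b, -(ψ x * w x) * f x := by
    simpa only [h.left_eq_zero, h.right_eq_zero, zero_mul, sub_self, zero_sub] using
      integral_mul_deriv_eq_deriv_mul_of_hasDerivAt h.continuousOn hf h.hasDerivAt hff'
        h.intervalIntegrable.neg hf'
  simp only [neg_mul, intervalIntegral.integral_neg, neg_neg] at by_parts
  simp only [mul_right_comm _ _ (w _), by_parts, neg_add_cancel]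

/-- The Laguerre weight `x ^ α * exp (-x)`, to be considered on `x > 0` only: for negative `x` the
real power takes a conventional value. -/
noncomputable def laguerreWeight (α x : ℝ) : ℝ :=
  x ^ α * Real.exp (-x)

theorem mul_laguerreWeight {α : ℝ} (hα : α + 1 ≠ 0) (x : ℝ) :
    x * laguerreWeight α x = laguerreWeight (α + 1) x := by
  rcases eq_or_ne x 0 with rfl | hx
  · simp only [laguerreWeight, Real.zero_rpow hα, zero_mul]
  · rw [laguerreWeight, laguerreWeight, Real.rpow_add_one hx]
    ring

theorem continuous_laguerreWeight {α : ℝ} (hα : 0 ≤ α) : Continuous (laguerreWeight α) :=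
  (Real.continuous_rpow_const hα).mul (Real.continuous_exp.comp continuous_neg)

theorem intervalIntegrable_laguerreWeight {α : ℝ} (hα : -1 < α) (a b : ℝ) :
    IntervalIntegrable (laguerreWeight α) volume a b :=
  (intervalIntegrable_rpow' hα).mul_continuousOn
    (Real.continuous_exp.comp continuous_neg).continuousOn

theorem hasDerivAt_mul_laguerreWeight (α : ℝ) {x : ℝ} (hx : x ≠ 0) :
    HasDerivAt (fun x ↦ x * laguerreWeight α x) ((α + 1 - x) * laguerreWeight α x) x := by
  have hpow : HasDerivAt (fun x : ℝ ↦ x ^ α) (α * x ^ (α - 1)) x :=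
    Real.hasDerivAt_rpow_const (Or.inl hx)
  have hexp : HasDerivAt (fun x : ℝ ↦ Real.exp (-x)) (-Real.exp (-x)) x := by
    simpa only [mul_neg_one] using (hasDerivAt_neg x).exp
  refine ((hasDerivAt_id x).mul (hpow.mul hexp)).congr_deriv ?_
  simp only [laguerreWeight, Pi.mul_apply, id, Real.rpow_sub_one hx]
  field_simp
  ring

theorem isPearsonTriple_laguerreWeight {α z : ℝ} (hα : -1 < α) (hz : 0 ≤ z) :
    IsPearsonTriple 0 z (fun x ↦ (x - z) * x)
      (fun x ↦ -(x * (z + 2 + α - x)) + z * (1 + α)) (laguerreWeight α) where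
  continuousOn := by
    have hα' : 0 < α + 1 := by linarith
    simp only [mul_assoc, mul_laguerreWeight hα'.ne']
    exact ((continuous_sub_right z).mul (continuous_laguerreWeight hα'.le)).continuousOn
  hasDerivAt x hx := by
    have hx₀ : x ≠ 0 := by
      rw [min_eq_left hz] at hx
      exact hx.1.ne'
    simp only [mul_assoc]
    refine (((hasDerivAt_id x).sub_const z).mul
      (hasDerivAt_mul_laguerreWeight α hx₀)).congr_deriv ?_
    simp only [id]
    ring
  intervalIntegrable :=
    (intervalIntegrable_laguerreWeight hα 0 z).continuousOn_mul
      (Continuous.continuousOn (by fun_prop))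
  left_eq_zero := by simp only [mul_zero, zero_mul]
  right_eq_zero := by simp only [sub_self, zero_mul]

theorem truncated_laguerre_pearson_general {α z : ℝ} (hα : -1 < α) (hz : 0 ≤ z) {f f' : ℝ → ℝ}
    (hf : ContinuousOn f (Set.Icc 0 z)) (hff' : ∀ x ∈ Set.Ioo 0 z, HasDerivAt f (f' x) x)
    (hf' : IntervalIntegrable f' volume 0 z) :
    -(∫ x in (0:ℝ)..z, (x - z) * x * f' x * x ^ α * Real.exp (-x)) +
      (∫ x in (0:ℝ)..z,
        (-(x * (z + 2 + α - x)) + z * (1 + α)) * f x * x ^ α * Real.exp (-x)) = 0 := by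
  have hderiv : ∀ x ∈ Set.Ioo (min 0 z) (max 0 z), HasDerivAt f (f' x) x := by
    rwa [min_eq_left hz, max_eq_right hz]
  rw [← Set.uIcc_of_le hz] at hf
  simpa only [laguerreWeight, mul_assoc] using
    (isPearsonTriple_laguerreWeight hα hz).neg_integral_add_integral_eq_zero hf hderiv hf'

/-- The truncated Laguerre functional `⟨ℓ, p⟩ = ∫₀^z p(x) x^α e^{−x} dx` satisfies the
distributional Pearson equation `D(φℓ) + ψℓ = 0` with `φ(x) = (x−z)x` and
`ψ(x) = −x(z+2+α−x) + z(1+α)`. -/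
theorem truncated_laguerre_pearson (α z : ℝ) (hα : -1 < α) (hz : 0 < z) (p : Polynomial ℝ) :
    -(∫ x in (0:ℝ)..z,
        (x - z) * x * (Polynomial.derivative p).eval x * x ^ α * Real.exp (-x)) +
      (∫ x in (0:ℝ)..z,
        (-(x * (z + 2 + α - x)) + z * (1 + α)) * p.eval x * x ^ α * Real.exp (-x)) = 0 :=
  truncated_laguerre_pearson_general hα hz.le p.continuousOn (fun x _ ↦ p.hasDerivAt x)
    (p.derivative.continuous.intervalIntegrable 0 z)
end

section
/- The moments h_m = ∫_{−√z}^{√z} x^m |x|^{2α+1} e^{−x²} dx of the truncated generalized Hermite functional satisfy: (i) h_{2k+1} = 0 for all k ≥ 0; (ii) h_{2m} = ∫₀^z x^{m+α} e^{−x} dx for all m ≥ 0; and (iii) h_{2n+4} − (n + z + 2 + α)·h_{2n+2} + z·(n + α + 1)·h_{2n} = 0 for all n ≥ 0, with h₂ = (α+1)h₀ − z^{α+1} e^{−z}. -/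
open MeasureTheory intervalIntegral

/-!
The weight is even, so the odd moments vanish, and away from `0` the integrand of `h_{2m}` is
`|x| ((x²)^(m+α) e^{-x²})`. The substitution `t = x²` therefore turns `h_{2m}` into the lower
incomplete gamma value `γ(m + α + 1, z)`. The recurrence `γ(s + 1, z) = s γ(s, z) - z^s e^{-z}`
gives `h₂`, and eliminating the boundary term `z^s e^{-z}` between two consecutive instances gives
the three-term relation.
-/

section Symmetry

variable {E : Type*} [NormedAddCommGroup E] [NormedSpace ℝ E] {f : ℝ → E}

lemma integral_neg_self_eq_zero_of_odd (hf : f.Odd) (a : ℝ) : ∫ x in -a..a, f x = 0 := by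
  have hneg : -∫ x in -a..a, f x = ∫ x in -a..a, f x := by
    rw [← intervalIntegral.integral_neg, ← funext hf, integral_comp_neg, neg_neg]
  have : IsAddTorsionFree E := .of_isTorsionFree ℝ E
  exact neg_eq_self.mp hneg

lemma integral_neg_self_eq_two_smul_of_even (hf : f.Even) (a : ℝ) :
    ∫ x in -a..a, f x = (2 : ℝ) • ∫ x in 0..a, f x := by
  by_cases hint : IntervalIntegrable f volume 0 a
  · have hint' : IntervalIntegrable f volume (-a) 0 := by
      simpa only [hf.eq, neg_zero] using ((IntervalIntegrable.iff_comp_neg).mp hint).symm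
    have hleft : ∫ x in -a..0, f x = ∫ x in 0..a, f x := by
      simpa only [hf.eq, neg_zero] using (integral_comp_neg f (a := 0) (b := a)).symm
    rw [← integral_add_adjacent_intervals hint' hint, hleft, two_smul]
  · have hint' : ¬IntervalIntegrable f volume (-a) a := fun h ↦
      hint <| h.mono_set <| Set.uIcc_subset_uIcc
        (Set.mem_uIcc.mpr <| by grind) Set.right_mem_uIcc
    rw [integral_undef hint', integral_undef hint, smul_zero]

lemma integral_abs_smul_comp_sq (g : ℝ → E) {z : ℝ} (hz : 0 ≤ z) :
    ∫ x in -√z..√z, |x| • g (x ^ 2) = ∫ t in 0..z, g t := by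
  have heven : Function.Even fun x : ℝ ↦ |x| • g (x ^ 2) := fun x ↦ by
    simp only [abs_neg, even_two, Even.neg_pow]
  calc ∫ x in -√z..√z, |x| • g (x ^ 2)
    _ = ∫ x in 0..√z, (2 * x) • g (x ^ 2) := by
      rw [integral_neg_self_eq_two_smul_of_even heven, ← intervalIntegral.integral_smul]
      refine integral_congr fun x hx ↦ ?_
      rw [Set.uIcc_of_le z.sqrt_nonneg] at hx
      simp only [abs_of_nonneg hx.1, mul_smul]
    _ = ∫ t in 0 ^ 2..√z ^ 2, g t :=
      integral_deriv_smul_comp_of_deriv_nonneg (by fun_prop)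
        (fun x _ ↦ by simpa using hasDerivAt_pow 2 x)
        (fun x hx ↦ by rw [min_eq_left z.sqrt_nonneg] at hx; linarith [hx.1])
    _ = ∫ t in 0..z, g t := by rw [Real.sq_sqrt hz, zero_pow two_ne_zero]

end Symmetry

lemma integral_pow_two_mul_mul_abs_rpow_mul_comp_sq (m : ℕ) (α : ℝ) (w : ℝ → ℝ) {z : ℝ}
    (hz : 0 ≤ z) :
    ∫ x in -√z..√z, x ^ (2 * m) * |x| ^ (2 * α + 1) * w (x ^ 2) =
      ∫ t in 0..z, t ^ (m + α) * w t := by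
  rw [← integral_abs_smul_comp_sq _ hz]
  refine integral_congr_ae ?_
  filter_upwards [Measure.ae_ne volume 0] with x hx _
  have habs : 0 < |x| := abs_pos.mpr hx
  have hpow : (x ^ 2) ^ (m + α) = x ^ (2 * m) * |x| ^ (2 * α) := by
    rw [add_comm, Real.rpow_add_natCast (pow_ne_zero 2 hx), ← pow_mul, mul_comm, ← sq_abs,
      ← Real.rpow_natCast_mul habs.le, Nat.cast_ofNat]
  rw [hpow, Real.rpow_add_one habs.ne', smul_eq_mul]
  ring

/-- The lower incomplete gamma function `γ(s, z) = ∫₀ᶻ t^(s-1) e^(-t) dt` of real arguments, the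
real counterpart of `Complex.partialGamma`. The integral converges for `0 < s`. -/
noncomputable def lowerGamma (s z : ℝ) : ℝ :=
  ∫ t in 0..z, t ^ (s - 1) * Real.exp (-t)

namespace lowerGamma

variable {s z : ℝ}

lemma ofReal_eq_partialGamma (s : ℝ) (hz : 0 ≤ z) :
    (lowerGamma s z : ℂ) = Complex.partialGamma s z := by
  rw [lowerGamma, Complex.partialGamma, ← intervalIntegral.integral_ofReal]
  refine integral_congr fun t ht ↦ ?_
  rw [Set.uIcc_of_le hz] at ht
  push_cast [Complex.ofReal_cpow ht.1]
  exact mul_comm _ _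

lemma add_one (hs : 0 < s) (hz : 0 ≤ z) :
    lowerGamma (s + 1) z = s * lowerGamma s z - z ^ s * Real.exp (-z) := by
  have h := Complex.partialGamma_add_one (s := s) (by simpa using hs) hz
  rw [← Complex.ofReal_one, ← Complex.ofReal_add, ← ofReal_eq_partialGamma _ hz,
    ← ofReal_eq_partialGamma _ hz, ← Complex.ofReal_cpow hz] at h
  rw [mul_comm (z ^ s)]
  exact_mod_cast h

lemma three_term_recurrence (hs : 0 < s) (hz : 0 ≤ z) :
    lowerGamma (s + 2) z - (s + z + 1) * lowerGamma (s + 1) z + z * s * lowerGamma s z = 0 := by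
  have h₂ : lowerGamma (s + 2) z =
      (s + 1) * lowerGamma (s + 1) z - z ^ s * z * Real.exp (-z) := by
    rw [← Real.rpow_add_one' hz (by positivity), ← add_one (by positivity) hz, add_assoc,
      one_add_one_eq_two]
  linear_combination h₂ - z * add_one hs hz

end lowerGamma

/-- The moments `h_m = ∫_{−√z}^{√z} x^m |x|^{2α+1} e^{−x²} dx` of the truncated generalized
Hermite functional satisfy: (i) odd moments vanish; (ii) `h_{2m} = ∫₀^z x^{m+α} e^{−x} dx`;
(iii) `h_{2n+4} − (n+z+2+α)h_{2n+2} + z(n+α+1)h_{2n} = 0`, with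
`h₂ = (α+1)h₀ − z^{α+1} e^{−z}`. -/
theorem truncated_generalized_hermite_moments (α z : ℝ) (hα : -1 < α) (hz : 0 < z)
    (h : ℕ → ℝ)
    (hh : ∀ m : ℕ, h m =
      ∫ x in (-(Real.sqrt z))..(Real.sqrt z), x ^ m * |x| ^ (2 * α + 1) * Real.exp (-x ^ 2)) :
    (∀ k : ℕ, h (2 * k + 1) = 0) ∧
      (∀ m : ℕ, h (2 * m) = ∫ x in (0:ℝ)..z, x ^ ((m : ℝ) + α) * Real.exp (-x)) ∧
      (∀ n : ℕ, h (2 * n + 4) - ((n : ℝ) + z + 2 + α) * h (2 * n + 2)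
          + z * ((n : ℝ) + α + 1) * h (2 * n) = 0) ∧
      h 2 = (α + 1) * h 0 - z ^ (α + 1) * Real.exp (-z) := by
  have hodd (k : ℕ) : h (2 * k + 1) = 0 := by
    refine (hh _).trans (integral_neg_self_eq_zero_of_odd (fun x ↦ ?_) _)
    simp only [(odd_two_mul_add_one k).neg_pow, abs_neg, even_two.neg_pow, neg_mul]
  have heven (m : ℕ) : h (2 * m) = ∫ x in (0:ℝ)..z, x ^ ((m : ℝ) + α) * Real.exp (-x) :=
    (hh _).trans (integral_pow_two_mul_mul_abs_rpow_mul_comp_sq m α (fun t ↦ Real.exp (-t)) hz.le)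
  have hgamma (m : ℕ) : h (2 * m) = lowerGamma (m + α + 1) z := by
    rw [heven, lowerGamma, add_sub_cancel_right]
  refine ⟨hodd, heven, fun n ↦ ?_, ?_⟩
  · have hs : 0 < n + α + 1 := by linarith [n.cast_nonneg (α := ℝ)]
    have h₁ : h (2 * n + 2) = lowerGamma (n + α + 1 + 1) z := 
      (hgamma (n + 1)).trans (by push_cast; ring_nf)
    have h₂ : h (2 * n + 4) = lowerGamma (n + α + 1 + 2) z := 
      (hgamma (n + 2)).trans (by push_cast; ring_nf)
    rw [h₁, h₂, hgamma]
    linear_combination lowerGamma.three_term_recurrence hs hz.le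
  · have h₀ : h 0 = lowerGamma (α + 1) z := by simpa using hgamma 0
    have h₁ : h 2 = lowerGamma (α + 1 + 1) z := by simpa [add_comm 1 α] using hgamma 1
    rw [h₀, h₁, lowerGamma.add_one (by linarith) hz.le]
end

section
/- For every real polynomial p, the truncated Laguerre functional satisfies ⟨ℓ, x·p′(x)⟩ = p(z)·z^{α+1}·e^{−z} − (α + 1)·⟨ℓ, p⟩ + ⟨ℓ, x·p⟩. -/
open MeasureTheory intervalIntegral

/-!
The weight `w x = x ^ α * exp (-x)` satisfies the Pearson equation
`(x * w x)' = (α + 1 - x) * w x`. Integrating `f' x * (x * w x)` by parts therefore gives the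
identity for every continuous `f` with integrable derivative; the boundary term at `0` vanishes
because `α + 1 > 0`.
-/

section LaguerreWeight

variable {α : ℝ}

theorem hasDerivAt_rpow_add_one_mul_exp_neg {x : ℝ} (hx : x ≠ 0) :
    HasDerivAt (fun x => x ^ (α + 1) * Real.exp (-x))
      ((α + 1 - x) * (x ^ α * Real.exp (-x))) x := by
  have h_rpow : HasDerivAt (fun x : ℝ => x ^ (α + 1)) ((α + 1) * x ^ α) x := by
    simpa only [add_sub_cancel_right] using
      Real.hasDerivAt_rpow_const (p := α + 1) (Or.inl hx)
  have h_exp : HasDerivAt (fun x : ℝ => Real.exp (-x)) (Real.exp (-x) * -1) x :=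
    (hasDerivAt_neg x).exp
  refine (h_rpow.mul h_exp).congr_deriv ?_
  rw [Real.rpow_add_one hx]
  ring

theorem continuous_rpow_add_one_mul_exp_neg (hα : -1 ≤ α) :
    Continuous fun x : ℝ => x ^ (α + 1) * Real.exp (-x) :=
  (Real.continuous_rpow_const (by linarith)).mul (by fun_prop)

theorem intervalIntegrable_mul_rpow_mul_exp_neg (hα : -1 < α) {a b : ℝ} {g : ℝ → ℝ}
    (hg : ContinuousOn g (Set.uIcc a b)) :
    IntervalIntegrable (fun x => g x * x ^ α * Real.exp (-x)) volume a b :=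
  ((intervalIntegrable_rpow' hα).continuousOn_mul hg).mul_continuousOn (by fun_prop)

theorem integral_mul_add_one_sub_mul_rpow_mul_exp_neg (hα : -1 < α) {a b : ℝ} {f : ℝ → ℝ}
    (hf : ContinuousOn f (Set.uIcc a b)) :
    (∫ x in a..b, f x * ((α + 1 - x) * (x ^ α * Real.exp (-x)))) =
      (α + 1) * (∫ x in a..b, f x * x ^ α * Real.exp (-x))
        - ∫ x in a..b, x * f x * x ^ α * Real.exp (-x) := by
  rw [← intervalIntegral.integral_const_mul, ← intervalIntegral.integral_sub
    ((intervalIntegrable_mul_rpow_mul_exp_neg hα hf).const_mul (α + 1))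
    (intervalIntegrable_mul_rpow_mul_exp_neg hα (g := fun x => x * f x) (by fun_prop))]
  congr 1 with x
  ring

theorem truncated_laguerre_xDx_general {z : ℝ} (hα : -1 < α) (hz : 0 ≤ z) {f f' : ℝ → ℝ}
    (hf : ContinuousOn f (Set.Icc 0 z)) (hff' : ∀ x ∈ Set.Ioo 0 z, HasDerivAt f (f' x) x)
    (hf' : IntervalIntegrable f' volume 0 z) :
    (∫ x in (0:ℝ)..z, x * f' x * x ^ α * Real.exp (-x)) =
      f z * z ^ (α + 1) * Real.exp (-z)
        - (α + 1) * (∫ x in (0:ℝ)..z, f x * x ^ α * Real.exp (-x))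
        + (∫ x in (0:ℝ)..z, x * f x * x ^ α * Real.exp (-x)) := by
  have hα' : 0 < α + 1 := by linarith
  rw [← Set.uIcc_of_le hz] at hf
  have h_weight_integrable : IntervalIntegrable
      (fun x => (α + 1 - x) * (x ^ α * Real.exp (-x))) volume 0 z := by
    simpa only [mul_assoc] using intervalIntegrable_mul_rpow_mul_exp_neg hα
      (g := fun x => α + 1 - x) (by fun_prop)
  have h_parts := integral_mul_deriv_eq_deriv_mul_of_hasDerivAt hf
    (continuous_rpow_add_one_mul_exp_neg hα.le).continuousOn
    (by simpa only [min_eq_left hz, max_eq_right hz] using hff')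
    (fun x hx => hasDerivAt_rpow_add_one_mul_exp_neg
      (by rw [min_eq_left hz] at hx; exact hx.1.ne'))
    hf' h_weight_integrable
  have h_shift : (∫ x in (0:ℝ)..z, x * f' x * x ^ α * Real.exp (-x)) =
      ∫ x in (0:ℝ)..z, f' x * (x ^ (α + 1) * Real.exp (-x)) := by
    refine integral_congr fun x hx => ?_
    rw [Set.uIcc_of_le hz] at hx
    simp only [Real.rpow_add_one' hx.1 hα'.ne']
    ring
  rw [integral_mul_add_one_sub_mul_rpow_mul_exp_neg hα hf, Real.zero_rpow hα'.ne'] at h_parts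
  rw [h_shift]
  linarith

end LaguerreWeight

/-- For every real polynomial `p`, the truncated Laguerre functional satisfies
`⟨ℓ, x·p′(x)⟩ = p(z)·z^{α+1}·e^{−z} − (α+1)·⟨ℓ, p⟩ + ⟨ℓ, x·p⟩`. -/
theorem truncated_laguerre_xDx (α z : ℝ) (hα : -1 < α) (hz : 0 < z) (p : Polynomial ℝ) :
    (∫ x in (0:ℝ)..z, x * (Polynomial.derivative p).eval x * x ^ α * Real.exp (-x)) =
      p.eval z * z ^ (α + 1) * Real.exp (-z)
        - (α + 1) * (∫ x in (0:ℝ)..z, p.eval x * x ^ α * Real.exp (-x))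
        + (∫ x in (0:ℝ)..z, x * p.eval x * x ^ α * Real.exp (-x)) :=
  truncated_laguerre_xDx_general hα hz.le p.continuousOn (fun x _ => p.hasDerivAt x)
    (p.derivative.continuous.intervalIntegrable 0 z)
end

section
/- For every n ≥ 1, the recurrence coefficients of the truncated Laguerre polynomials satisfy the second Laguerre–Freud equation (2n − b_n + z + α + 2)·(a_{n+1} − a_n) + (1 − b_{n+1})·a_{n+1} + (3 + b_{n−1})·a_n + b_n² − z·b_n = 0. -/
/-!
The weight `w x = x ^ α * exp (-x)` satisfies a Pearson equation `(σ w)' = τ w` with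
`σ = z X - X²` and `τ` quadratic. Since `σ w` vanishes at both ends of `[0, z]`, integration by
parts gives `⟨ℓ, σ q' + τ q⟩ = 0` for every polynomial `q`. Differentiate
`X Pₙ = Pₙ₊₁ + bₙ Pₙ + aₙ Pₙ₋₁`, multiply by `σ` and pair with `Pₙ`. Of the resulting pairings
`⟨ℓ, σ Pᵢ' Pⱼ⟩` with `|i - j| = 1`, those with `i < j` are read off from leading coefficients
because `deg σ ≤ 2`, and those with `i > j` reduce to them by taking `q = Pᵢ Pⱼ` above.
Dividing by `⟨ℓ, Pₙ²⟩` leaves the Laguerre–Freud equation.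
-/

open MeasureTheory intervalIntegral Polynomial

section OrthogonalPolynomials

variable {R : Type*} [CommRing R] {L : R[X] →ₗ[R] R} {P : ℕ → R[X]} {a b : ℕ → R} {σ τ : R[X]}

/-- `P` is the sequence of monic orthogonal polynomials of the moment functional `L`. Unlike
in the classical notion, the norms `L (P n * P n)` may vanish. -/
structure IsMonicOrthogonal (L : R[X] →ₗ[R] R) (P : ℕ → R[X]) : Prop where
  monic (n : ℕ) : (P n).Monic
  natDegree_eq (n : ℕ) : (P n).natDegree = n
  orthogonal {m n : ℕ} (hmn : m ≠ n) : L (P m * P n) = 0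

/-- The three-term recurrence of a monic sequence, indexed so that neither `P (-1)` nor `a 0`
occurs. -/
structure HasThreeTermRecurrence (P : ℕ → R[X]) (a b : ℕ → R) : Prop where
  zero : X * P 0 = P 1 + C (b 0) * P 0
  succ (n : ℕ) : X * P (n + 1) = P (n + 2) + C (b (n + 1)) * P (n + 1) + C (a (n + 1)) * P n

/-- The Pearson equation `D(σ L) = τ L`, where the distributional derivative of a functional is
`⟨D(L), q⟩ = -⟨L, q'⟩`. -/
def SatisfiesPearson (L : R[X] →ₗ[R] R) (σ τ : R[X]) : Prop :=
  ∀ q : R[X], L (σ * derivative q + τ * q) = 0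

lemma map_C_mul (L : R[X] →ₗ[R] R) (c : R) (q : R[X]) : L (C c * q) = c * L q := by
  rw [← smul_eq_C_mul, map_smul, smul_eq_mul]

lemma map_quadratic_mul (L : R[X] →ₗ[R] R) (hσ : σ.natDegree ≤ 2) (q : R[X]) :
    L (σ * q) = σ.coeff 2 * L (X ^ 2 * q) + σ.coeff 1 * L (X * q) + σ.coeff 0 * L q := by
  conv_lhs => rw [eq_quadratic_of_degree_le_two (natDegree_le_iff_degree_le.mp hσ)]
  simp only [add_mul, mul_assoc, map_add, map_C_mul]

namespace HasThreeTermRecurrence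

lemma map_X_mul_succ_mul (hrec : HasThreeTermRecurrence P a b) (L : R[X] →ₗ[R] R) (n : ℕ)
    (q : R[X]) :
    L (X * P (n + 1) * q)
      = L (P (n + 2) * q) + b (n + 1) * L (P (n + 1) * q) + a (n + 1) * L (P n * q) := by
  rw [hrec.succ]
  simp only [add_mul, mul_assoc, map_add, map_C_mul]

lemma map_differentiated_recurrence (hrec : HasThreeTermRecurrence P a b) (L : R[X] →ₗ[R] R)
    (σ : R[X]) (n : ℕ) :
    L (σ * (P (n + 1) * P (n + 1))) + L (σ * derivative (P (n + 1)) * P (n + 2))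
        + a (n + 1) * L (σ * derivative (P (n + 1)) * P n)
      = L (σ * derivative (P (n + 2)) * P (n + 1))
        + a (n + 1) * L (σ * derivative (P n) * P (n + 1)) := by
  have hderiv := congrArg derivative (hrec.succ n)
  simp only [derivative_mul, derivative_add, derivative_X, derivative_C] at hderiv
  simp only [← map_C_mul, ← map_add]
  congr 1
  linear_combination
    σ * P (n + 1) * hderiv - σ * derivative (P (n + 1)) * hrec.succ n

end HasThreeTermRecurrence

namespace IsMonicOrthogonal

lemma coeff_self (hP : IsMonicOrthogonal L P) (n : ℕ) : (P n).coeff n = 1 := by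
  simpa only [hP.natDegree_eq] using (hP.monic n).coeff_natDegree

lemma map_mul_eq_zero_of_degree_lt (hP : IsMonicOrthogonal L P) {n : ℕ} {q : R[X]}
    (hq : q.degree < n) : L (q * P n) = 0 := by
  nontriviality R
  let S : Polynomial.Sequence R :=
    ⟨P, fun i ↦ (degree_eq_iff_natDegree_eq (hP.monic i).ne_zero).mpr (hP.natDegree_eq i)⟩
  have hunit : ∀ i < n, IsUnit (S i).leadingCoeff := fun i _ ↦
    (hP.monic i).leadingCoeff.symm ▸ isUnit_one
  have hq_span : q ∈ Submodule.span R (S '' Set.Iio n) := by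
    rw [S.span_degreeLT hunit]
    exact mem_degreeLT.mpr hq
  have hspan_le : Submodule.span R (S '' Set.Iio n) ≤
      LinearMap.ker (L ∘ₗ LinearMap.mulRight R (P n)) := by
    rw [Submodule.span_le]
    rintro _ ⟨i, hi, rfl⟩
    exact hP.orthogonal (ne_of_lt hi)
  exact hspan_le hq_span

lemma map_mul_of_natDegree_le (hP : IsMonicOrthogonal L P) {n : ℕ} {q : R[X]}
    (hq : q.natDegree ≤ n) : L (q * P n) = q.coeff n * L (P n * P n) := by
  have hlow : (q - C (q.coeff n) * P n).degree < n := by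
    rw [degree_lt_iff_coeff_zero]
    intro k hk
    rcases hk.eq_or_lt with rfl | hk
    · simp [hP.coeff_self]
    · simp [coeff_eq_zero_of_natDegree_lt (hq.trans_lt hk),
        coeff_eq_zero_of_natDegree_lt ((hP.natDegree_eq n).trans_lt hk)]
  have h := hP.map_mul_eq_zero_of_degree_lt hlow
  rwa [sub_mul, mul_assoc, map_sub, map_C_mul, sub_eq_zero] at h

lemma natDegree_X_mul_le (hP : IsMonicOrthogonal L P) (n : ℕ) :
    (X * P n).natDegree ≤ n + 1 :=
  (natDegree_mul_le_of_le natDegree_X_le (hP.natDegree_eq n).le).trans_eq (add_comm 1 n)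

lemma map_X_mul_mul_succ (hP : IsMonicOrthogonal L P) (n : ℕ) :
    L (X * P n * P (n + 1)) = L (P (n + 1) * P (n + 1)) := by
  rw [hP.map_mul_of_natDegree_le (hP.natDegree_X_mul_le n), coeff_X_mul, hP.coeff_self, one_mul]

lemma map_X_mul_mul_add_two (hP : IsMonicOrthogonal L P) (n : ℕ) :
    L (X * P n * P (n + 2)) = 0 :=
  hP.map_mul_eq_zero_of_degree_lt <|
    (degree_le_of_natDegree_le (hP.natDegree_X_mul_le n)).trans_lt
      (Nat.cast_lt.mpr (n + 1).lt_succ_self)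

lemma map_mul_self_succ (hP : IsMonicOrthogonal L P) (hrec : HasThreeTermRecurrence P a b)
    (n : ℕ) : L (P (n + 1) * P (n + 1)) = a (n + 1) * L (P n * P n) := by
  rw [← hP.map_X_mul_mul_succ, mul_right_comm, hrec.map_X_mul_succ_mul,
    hP.orthogonal (by omega : n + 2 ≠ n), hP.orthogonal (by omega : n + 1 ≠ n)]
  ring

lemma map_X_mul_mul_self (hP : IsMonicOrthogonal L P) (hrec : HasThreeTermRecurrence P a b)
    (n : ℕ) : L (X * P n * P n) = b n * L (P n * P n) := by
  cases n with
  | zero =>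
    rw [hrec.zero, add_mul, mul_assoc, map_add, map_C_mul, hP.orthogonal one_ne_zero, zero_add]
  | succ n =>
    rw [hrec.map_X_mul_succ_mul, hP.orthogonal (by omega : n + 2 ≠ n + 1),
      hP.orthogonal (by omega : n ≠ n + 1)]
    ring

lemma map_X_sq_mul_self_succ (hP : IsMonicOrthogonal L P) (hrec : HasThreeTermRecurrence P a b)
    (n : ℕ) :
    L (X ^ 2 * (P (n + 1) * P (n + 1)))
      = (a (n + 2) + b (n + 1) ^ 2 + a (n + 1)) * L (P (n + 1) * P (n + 1)) := by
  calc L (X ^ 2 * (P (n + 1) * P (n + 1)))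
      = L (X * P (n + 1) * (X * P (n + 1))) := by ring_nf
    _ = L (X * P (n + 1) * P (n + 2)) + b (n + 1) * L (X * P (n + 1) * P (n + 1))
          + a (n + 1) * L (X * P n * P (n + 1)) := by
      rw [hrec.map_X_mul_succ_mul]
      ring_nf
    _ = _ := by
      rw [hP.map_X_mul_mul_succ, hP.map_X_mul_mul_self hrec, hP.map_X_mul_mul_succ,
        hP.map_mul_self_succ hrec (n + 1)]
      ring

lemma map_X_sq_mul_mul_succ (hP : IsMonicOrthogonal L P) (hrec : HasThreeTermRecurrence P a b)
    (n : ℕ) :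
    L (X ^ 2 * (P n * P (n + 1))) = (b n + b (n + 1)) * L (P (n + 1) * P (n + 1)) := by
  calc L (X ^ 2 * (P n * P (n + 1)))
      = L (X * P (n + 1) * (X * P n)) := by ring_nf
    _ = L (X * P n * P (n + 2)) + b (n + 1) * L (X * P n * P (n + 1))
          + a (n + 1) * L (X * P n * P n) := by
      rw [hrec.map_X_mul_succ_mul]
      ring_nf
    _ = _ := by
      rw [hP.map_X_mul_mul_add_two, hP.map_X_mul_mul_succ, hP.map_X_mul_mul_self hrec,
        hP.map_mul_self_succ hrec]
      ring

lemma map_quadratic_mul_self_succ (hP : IsMonicOrthogonal L P)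
    (hrec : HasThreeTermRecurrence P a b) (hσ : σ.natDegree ≤ 2) (n : ℕ) :
    L (σ * (P (n + 1) * P (n + 1)))
      = (σ.coeff 2 * (a (n + 2) + b (n + 1) ^ 2 + a (n + 1)) + σ.coeff 1 * b (n + 1) + σ.coeff 0)
        * L (P (n + 1) * P (n + 1)) := by
  rw [map_quadratic_mul L hσ, hP.map_X_sq_mul_self_succ hrec, ← mul_assoc X,
    hP.map_X_mul_mul_self hrec]
  ring

lemma map_quadratic_mul_mul_succ (hP : IsMonicOrthogonal L P)
    (hrec : HasThreeTermRecurrence P a b) (hτ : τ.natDegree ≤ 2) (n : ℕ) :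
    L (τ * (P n * P (n + 1)))
      = (τ.coeff 2 * (b n + b (n + 1)) + τ.coeff 1) * L (P (n + 1) * P (n + 1)) := by
  rw [map_quadratic_mul L hτ, hP.map_X_sq_mul_mul_succ hrec, ← mul_assoc X,
    hP.map_X_mul_mul_succ, hP.orthogonal n.lt_succ_self.ne]
  ring

lemma map_mul_derivative_mul_succ (hP : IsMonicOrthogonal L P) (hσ : σ.natDegree ≤ 2) (n : ℕ) :
    L (σ * derivative (P n) * P (n + 1)) = n * σ.coeff 2 * L (P (n + 1) * P (n + 1)) := by
  cases n with
  | zero => simp [derivative_of_natDegree_zero (hP.natDegree_eq 0)]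
  | succ n =>
    have hderiv : (derivative (P (n + 1))).natDegree ≤ n := by
      simpa only [hP.natDegree_eq, Nat.add_sub_cancel] using natDegree_derivative_le (P (n + 1))
    have hdeg : (σ * derivative (P (n + 1))).natDegree ≤ n + 2 := by
      simpa only [add_comm 2] using natDegree_mul_le_of_le hσ hderiv
    have hcoeff : (σ * derivative (P (n + 1))).coeff (n + 2) = σ.coeff 2 * (n + 1) := by
      rw [add_comm n 2, coeff_mul_add_eq_of_natDegree_le hσ hderiv, coeff_derivative,
        hP.coeff_self, one_mul]
    rw [hP.map_mul_of_natDegree_le hdeg, hcoeff]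
    push_cast
    ring

lemma map_mul_derivative_succ_mul (hP : IsMonicOrthogonal L P) (hL : SatisfiesPearson L σ τ)
    (hσ : σ.natDegree ≤ 2) (n : ℕ) :
    L (σ * derivative (P (n + 1)) * P n)
      = -(n * σ.coeff 2 * L (P (n + 1) * P (n + 1)) + L (τ * (P n * P (n + 1)))) := by
  rw [eq_neg_iff_add_eq_zero, ← hP.map_mul_derivative_mul_succ hσ, ← map_add, ← map_add,
    ← hL (P n * P (n + 1)), derivative_mul]
  ring_nf

theorem laguerre_freud_of_satisfiesPearson [NoZeroDivisors R] (hP : IsMonicOrthogonal L P)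
    (hrec : HasThreeTermRecurrence P a b) (hL : SatisfiesPearson L σ τ) (hσ : σ.natDegree ≤ 2)
    (hτ : τ.natDegree ≤ 2) (n : ℕ) (hnorm : L (P (n + 1) * P (n + 1)) ≠ 0) :
    σ.coeff 2 * (a (n + 2) + b (n + 1) ^ 2 + a (n + 1)) + σ.coeff 1 * b (n + 1) + σ.coeff 0
      + a (n + 2) * (2 * (n + 1) * σ.coeff 2 + τ.coeff 2 * (b (n + 1) + b (n + 2)) + τ.coeff 1)
      - a (n + 1) * (2 * n * σ.coeff 2 + τ.coeff 2 * (b n + b (n + 1)) + τ.coeff 1) = 0 := by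
  have hderiv := hrec.map_differentiated_recurrence L σ n
  rw [hP.map_quadratic_mul_self_succ hrec hσ, hP.map_mul_derivative_mul_succ hσ,
    hP.map_mul_derivative_mul_succ hσ, hP.map_mul_derivative_succ_mul hL hσ,
    hP.map_mul_derivative_succ_mul hL hσ, hP.map_quadratic_mul_mul_succ hrec hτ,
    hP.map_quadratic_mul_mul_succ hrec hτ, hP.map_mul_self_succ hrec (n + 1)] at hderiv
  push_cast at hderiv
  refine (mul_eq_zero.mp ?_).resolve_right hnorm
  linear_combination hderiv

end IsMonicOrthogonal

end OrthogonalPolynomials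

section WeightFunctional

variable {w : ℝ → ℝ} {s t : ℝ} {σ τ : ℝ[X]}

lemma intervalIntegrable_eval_mul (hw : IntervalIntegrable w volume s t) (p : ℝ[X]) :
    IntervalIntegrable (fun x ↦ p.eval x * w x) volume s t :=
  hw.continuousOn_mul p.continuousOn

/-- The moment functional `p ↦ ∫ x in s..t, p x * w x` of a weight `w`. Integrability of `w` is
an argument because additivity depends on it. -/
noncomputable def weightFunctional (hw : IntervalIntegrable w volume s t) : ℝ[X] →ₗ[ℝ] ℝ where
  toFun p := ∫ x in s..t, p.eval x * w x
  map_add' p q := by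
    simp only [eval_add, add_mul]
    exact integral_add (intervalIntegrable_eval_mul hw p) (intervalIntegrable_eval_mul hw q)
  map_smul' c p := by
    simp only [eval_smul, smul_eq_mul, mul_assoc, intervalIntegral.integral_const_mul,
      RingHom.id_apply]

lemma weightFunctional_apply (hw : IntervalIntegrable w volume s t) (p : ℝ[X]) :
    weightFunctional hw p = ∫ x in s..t, p.eval x * w x :=
  rfl

lemma weightFunctional_mul_self_pos (hw : IntervalIntegrable w volume s t) (hst : s < t)
    (hpos : ∀ x ∈ Set.Ioo s t, 0 < w x) {p : ℝ[X]} (hp : p ≠ 0) :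
    0 < weightFunctional hw (p * p) := by
  have hnonneg : 0 ≤ᵐ[volume.restrict (Set.uIoc s t)] fun x ↦ (p * p).eval x * w x := by
    rw [Set.uIoc_of_le hst.le, ← restrict_Ioo_eq_restrict_Ioc]
    filter_upwards [ae_restrict_mem measurableSet_Ioo] with x hx
    rw [eval_mul]
    exact mul_nonneg (mul_self_nonneg _) (hpos x hx).le
  have hsupport : Set.Ioo s t \ p.rootSet ℝ ⊆
      Function.support (fun x ↦ (p * p).eval x * w x) ∩ Set.Ioc s t := by
    rintro x ⟨hx, hroot⟩
    have hpx : p.eval x ≠ 0 := fun h ↦ hroot (by simp [mem_rootSet, hp, h])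
    refine ⟨?_, Set.Ioo_subset_Ioc_self hx⟩
    rw [Function.mem_support, eval_mul]
    exact mul_ne_zero (mul_self_ne_zero.mpr hpx) (hpos x hx).ne'
  rw [weightFunctional_apply,
    integral_pos_iff_support_of_nonneg_ae' hnonneg (intervalIntegrable_eval_mul hw _)]
  refine ⟨hst, lt_of_lt_of_le ?_ (measure_mono hsupport)⟩
  rw [measure_sdiff_null ((p.rootSet_finite ℝ).measure_zero volume)]
  simpa using hst

lemma satisfiesPearson_weightFunctional (hw : IntervalIntegrable w volume s t) (hst : s ≤ t)
    (hcont : ContinuousOn (fun x ↦ σ.eval x * w x) (Set.Icc s t))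
    (hderiv : ∀ x ∈ Set.Ioo s t, HasDerivAt (fun x ↦ σ.eval x * w x) (τ.eval x * w x) x)
    (hs : σ.eval s * w s = 0) (ht : σ.eval t * w t = 0) :
    SatisfiesPearson (weightFunctional hw) σ τ := by
  intro q
  have hderiv_mul : ∀ x ∈ Set.Ioo s t, HasDerivAt (fun x ↦ σ.eval x * w x * q.eval x)
      ((σ * derivative q + τ * q).eval x * w x) x := fun x hx ↦
    ((hderiv x hx).mul (q.hasDerivAt x)).congr_deriv (by simp only [eval_add, eval_mul]; ring)
  rw [weightFunctional_apply, integral_eq_sub_of_hasDerivAt_of_le hst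
    (hcont.mul q.continuousOn) hderiv_mul (intervalIntegrable_eval_mul hw _)]
  simp only [Pi.mul_apply, hs, ht, zero_mul, sub_zero]

end WeightFunctional

section TruncatedLaguerre

variable {α z : ℝ}

lemma intervalIntegrable_rpow_mul_exp_neg (hα : -1 < α) (s t : ℝ) :
    IntervalIntegrable (fun x ↦ x ^ α * Real.exp (-x)) volume s t :=
  (intervalIntegrable_rpow' hα).mul_continuousOn (by fun_prop)

/-- The truncated Laguerre functional `ℓ`, the moment functional of `x ^ α * exp (-x)` on
`[0, z]`. -/
noncomputable def truncatedLaguerre (hα : -1 < α) (z : ℝ) : ℝ[X] →ₗ[ℝ] ℝ :=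
  weightFunctional (intervalIntegrable_rpow_mul_exp_neg hα 0 z)

lemma truncatedLaguerre_mul_self_pos (hα : -1 < α) (hz : 0 < z) {p : ℝ[X]} (hp : p ≠ 0) :
    0 < truncatedLaguerre hα z (p * p) :=
  weightFunctional_mul_self_pos _ hz
    (fun _ hx ↦ mul_pos (Real.rpow_pos_of_pos hx.1 α) (Real.exp_pos _)) hp

lemma continuousOn_mul_rpow (hα : -1 < α) : ContinuousOn (fun x : ℝ ↦ x * x ^ α) (Set.Ici 0) :=
  (Real.continuous_rpow_const (by linarith : 0 ≤ α + 1)).continuousOn.congr fun x hx ↦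
    (mul_comm _ _).trans (Real.rpow_add_one' hx (by linarith)).symm

lemma hasDerivAt_rpow_mul_exp_neg (α : ℝ) {x : ℝ} (hx : 0 < x) :
    HasDerivAt (fun x ↦ x ^ α * Real.exp (-x)) ((α / x - 1) * (x ^ α * Real.exp (-x))) x := by
  refine ((Real.hasDerivAt_rpow_const (Or.inl hx.ne')).mul (hasDerivAt_neg x).exp).congr_deriv ?_
  rw [Real.rpow_sub_one hx.ne']
  ring

lemma satisfiesPearson_truncatedLaguerre (hα : -1 < α) (hz : 0 ≤ z) :
    SatisfiesPearson (truncatedLaguerre hα z) (C z * X - X ^ 2)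
      (X ^ 2 - C (2 + α + z) * X + C ((1 + α) * z)) := by
  refine satisfiesPearson_weightFunctional _ hz ?_ (fun x hx ↦ ?_) (by simp) (by simp [sq])
  · have hcont : ContinuousOn (fun x ↦ (z - x) * (x * x ^ α) * Real.exp (-x)) (Set.Icc 0 z) :=
      .mul (.mul (by fun_prop) ((continuousOn_mul_rpow hα).mono Set.Icc_subset_Ici_self))
        (by fun_prop)
    refine hcont.congr fun x _ ↦ ?_
    simp only [eval_sub, eval_mul, eval_C, eval_X, eval_pow]
    ring
  · have hx0 : x ≠ 0 := hx.1.ne'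
    refine ((C z * X - X ^ 2).hasDerivAt x |>.mul
      (hasDerivAt_rpow_mul_exp_neg α hx.1)).congr_deriv ?_
    simp only [derivative_sub, derivative_C_mul, derivative_X, derivative_X_sq, eval_add, eval_sub,
      eval_mul, eval_C, eval_X, eval_pow, eval_one]
    field_simp
    ring

end TruncatedLaguerre

/-- Second Laguerre–Freud equation for the recurrence coefficients of the truncated
Laguerre polynomials. -/
theorem truncated_laguerre_freud_two (α z : ℝ) (hα : -1 < α) (hz : 0 < z)
    (P : ℕ → Polynomial ℝ)
    (hP_monic : ∀ n, (P n).Monic)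
    (hP_deg : ∀ n, (P n).natDegree = n)
    (hP_orth : ∀ m n, m ≠ n →
      ∫ x in (0:ℝ)..z, (P m).eval x * (P n).eval x * x ^ α * Real.exp (-x) = 0)
    (a b : ℕ → ℝ)
    (ha0 : a 0 = 0)
    (hrec0 : Polynomial.X * P 0 = P 1 + Polynomial.C (b 0) * P 0)
    (hrec : ∀ n, 1 ≤ n →
      Polynomial.X * P n = P (n + 1) + Polynomial.C (b n) * P n + Polynomial.C (a n) * P (n - 1)) :
    ∀ n : ℕ, 1 ≤ n →
      (2 * (n : ℝ) - b n + z + α + 2) * (a (n + 1) - a n)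
        + (1 - b (n + 1)) * a (n + 1) + (3 + b (n - 1)) * a n
        + (b n) ^ 2 - z * b n = 0 := by
  intro n hn
  obtain ⟨m, rfl⟩ := Nat.exists_eq_add_of_le' hn
  have hP : IsMonicOrthogonal (truncatedLaguerre hα z) P :=
    ⟨hP_monic, hP_deg, fun {i j} hij ↦ by
      simpa only [truncatedLaguerre, weightFunctional_apply, eval_mul, mul_assoc]
        using hP_orth i j hij⟩
  have hP_rec : HasThreeTermRecurrence P a b := ⟨hrec0, fun k ↦ hrec (k + 1) k.succ_pos⟩
  have hfreud := hP.laguerre_freud_of_satisfiesPearson hP_rec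
    (satisfiesPearson_truncatedLaguerre hα hz.le) (by compute_degree!) (by compute_degree!) m
    (truncatedLaguerre_mul_self_pos hα hz (hP_monic _).ne_zero).ne'
  simp only [coeff_add, coeff_sub, coeff_C_mul, coeff_X_pow, coeff_X, coeff_C, reduceIte,
    Nat.reduceEqDiff, OfNat.ofNat_ne_zero, one_ne_zero] at hfreud
  push_cast
  linear_combination -hfreud
end
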